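/- Let 2 ≤ q < ∞ and let (h_j)_{j∈ℤ} be measurable functions on a σ-finite measure space. Then ‖(∑_j |h_j|²)^{1/2}‖_{L^{q,2}} ≤ C (∑_j ‖h_j‖_{L^{q,2}}²)^{1/2} for a constant C depending only on q. -/

import Mathlib

/-! Squaring turns the claim into the triangle inequality for the `L^{q/2,1}` functional. With
`θ = 2 / q ∈ (0, 1]` and `F_j = h_j ^ 2`, the change of variables `t = s ^ 2` gives
`‖h_j‖_{q,2} ^ 2 = (1/2) ∫_0^∞ μ{F_j > t} ^ θ dt`, so it suffices that
`N F = ∫_0^∞ μ{F > t} ^ θ dt` is countably subadditive in `F ≥ 0`; the inequality then holds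
with `C = 1`.

For `θ = 1`, `N F = ∫ F dμ` by the layer-cake formula. For `θ < 1`, the concave function `u ^ θ` is
a positive mixture of truncations,
`u ^ θ / (θ (1 - θ)) = ∫_0^∞ min (u, l) l ^ (θ - 2) dl`, so by Tonelli it is enough that
`K_l F = ∫_0^∞ min (μ{F > t}, l) dt` is countably subadditive for each `l > 0`. This `K_l` is
the K-functional of the pair `(L¹, L^∞)`:
`K_l F = min_{s ≥ 0} (l s + ∫ (F - s)⁺ dμ)`, the minimum being attained, when finite, at the level `s` where
`μ{F > t}` drops below `l`. Choosing the optimal `s_j` for `F_j` and testing `∑ F_j` against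
`∑ s_j` gives subadditivity, since `(∑ F_j - ∑ s_j)⁺ ≤ ∑ (F_j - s_j)⁺`. -/

open MeasureTheory ENNReal

/-- The Lorentz `L^{p,r}` quasinorm, defined via the distribution function:
`‖f‖_{p,r} = (∫_0^∞ s^{r-1} μ{|f| > s}^{r/p} ds)^{1/r}` (up to a constant factor). -/
noncomputable def lorentzNorm {α : Type*} [MeasurableSpace α] (μ : Measure α)
    (p r : ℝ) (f : α → ℝ) : ℝ≥0∞ :=
  (∫⁻ s in Set.Ioi (0 : ℝ), ENNReal.ofReal (s ^ (r - 1)) * μ {x | s < |f x|} ^ (r / p)) ^ (1 / r)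

/-- Layer-cake formula above the level `s ≥ 0`. -/
lemma lintegral_sub_eq_lintegral_meas {α : Type*} [MeasurableSpace α] (μ : Measure α)
    [SigmaFinite μ] {F : α → ℝ≥0∞} (hF : Measurable F) {s : ℝ} (hs : 0 ≤ s) :
    ∫⁻ x, (F x - ENNReal.ofReal s) ∂μ
      = ∫⁻ t in Set.Ioi s, μ {x | ENNReal.ofReal t < F x} := by
  have hm : MeasurableSet {p : α × ℝ | ENNReal.ofReal p.2 < F p.1} :=
    measurableSet_lt (by fun_prop) (by fun_prop)
  have h1 : ∀ x, F x - ENNReal.ofReal s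
      = ∫⁻ t in Set.Ioi s, {p : α × ℝ | ENNReal.ofReal p.2 < F p.1}.indicator 1 (x, t) := by
    intro x
    have e : (fun t => {p : α × ℝ | ENNReal.ofReal p.2 < F p.1}.indicator
        (1 : α × ℝ → ℝ≥0∞) (x, t)) = {t : ℝ | ENNReal.ofReal t < F x}.indicator 1 := by
      ext t; simp [Set.indicator]
    have hmx : MeasurableSet {t : ℝ | ENNReal.ofReal t < F x} :=
      measurableSet_lt (by fun_prop) (by fun_prop)
    rw [e, lintegral_indicator_one hmx, Measure.restrict_apply hmx]
    rcases eq_or_ne (F x) ⊤ with h | h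
    · have : {t : ℝ | ENNReal.ofReal t < F x} ∩ Set.Ioi s = Set.Ioi s := by
        ext t; simp [h]
      rw [this, h]; simp
    · have : {t : ℝ | ENNReal.ofReal t < F x} ∩ Set.Ioi s = Set.Ioo s (F x).toReal := by
        ext t
        simp only [Set.mem_inter_iff, Set.mem_ofPred_eq, Set.mem_Ioi, Set.mem_Ioo]
        constructor
        · rintro ⟨ha, hb⟩
          exact ⟨hb, (ENNReal.ofReal_lt_iff_lt_toReal (hs.trans hb.le) h).1 ha⟩
        · rintro ⟨hb, ha⟩
          exact ⟨(ENNReal.ofReal_lt_iff_lt_toReal (hs.trans hb.le) h).2 ha, hb⟩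
      rw [this, Real.volume_Ioo, ENNReal.ofReal_sub _ hs, ENNReal.ofReal_toReal h]
  simp_rw [h1]
  rw [lintegral_lintegral_swap]
  · refine lintegral_congr fun t => ?_
    have e : (fun x => {p : α × ℝ | ENNReal.ofReal p.2 < F p.1}.indicator
        (1 : α × ℝ → ℝ≥0∞) (x, t)) = {x : α | ENNReal.ofReal t < F x}.indicator 1 := by
      ext x; simp [Set.indicator]
    rw [e, lintegral_indicator_one (measurableSet_lt (by fun_prop) (by fun_prop))]
  · exact (measurable_one.indicator hm).aemeasurable

lemma antitone_meas {α : Type*} [MeasurableSpace α] (μ : Measure α) (F : α → ℝ≥0∞) :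
    Antitone fun t : ℝ => μ {x | ENNReal.ofReal t < F x} := by
  intro a b hab
  exact measure_mono fun x hx => (ENNReal.ofReal_le_ofReal hab).trans_lt hx

/-- Upper bound for the K-functional of `(L¹, L^∞)` by any splitting level `s`. -/
lemma trunc_le {α : Type*} [MeasurableSpace α] (μ : Measure α)
    [SigmaFinite μ] {F : α → ℝ≥0∞} (hF : Measurable F) {s : ℝ} (hs : 0 ≤ s) (a : ℝ≥0∞) :
    ∫⁻ t in Set.Ioi (0 : ℝ), min (μ {x | ENNReal.ofReal t < F x}) a
      ≤ a * ENNReal.ofReal s + ∫⁻ x, (F x - ENNReal.ofReal s) ∂μ := by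
  rw [lintegral_sub_eq_lintegral_meas μ hF hs, ← Set.Ioc_union_Ioi_eq_Ioi hs,
    lintegral_union measurableSet_Ioi (Set.Ioc_disjoint_Ioi le_rfl)]
  refine add_le_add ?_ (lintegral_mono fun t => min_le_left _ _)
  calc _ ≤ ∫⁻ t in Set.Ioc 0 s, a := lintegral_mono fun t => min_le_right _ _
    _ = _ := by simp

/-- The K-functional of `(L¹, L^∞)` is attained at some splitting level `s` when it is
finite: take the infimum of the levels at which the distribution function is at most `a`. -/
lemma exists_le_trunc {α : Type*} [MeasurableSpace α] (μ : Measure α)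
    [SigmaFinite μ] {F : α → ℝ≥0∞} (hF : Measurable F) {a : ℝ≥0∞} (ha : a ≠ 0)
    (hK : ∫⁻ t in Set.Ioi (0 : ℝ), min (μ {x | ENNReal.ofReal t < F x}) a ≠ ⊤) :
    ∃ s : ℝ, 0 ≤ s ∧ a * ENNReal.ofReal s + ∫⁻ x, (F x - ENNReal.ofReal s) ∂μ
      ≤ ∫⁻ t in Set.Ioi (0 : ℝ), min (μ {x | ENNReal.ofReal t < F x}) a := by
  set g : ℝ → ℝ≥0∞ := fun t => μ {x | ENNReal.ofReal t < F x} with hg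
  have hanti : Antitone g := antitone_meas μ F
  set S : Set ℝ := {t | 0 ≤ t ∧ g t ≤ a} with hS
  have hne : S.Nonempty := by
    by_contra hcon
    rw [Set.not_nonempty_iff_eq_empty] at hcon
    apply hK
    have : ∫⁻ t in Set.Ioi (0 : ℝ), min (g t) a = ∫⁻ t in Set.Ioi (0 : ℝ), a := by
      refine setLIntegral_congr_fun measurableSet_Ioi fun t ht => ?_
      refine min_eq_right (le_of_not_ge fun h => ?_)
      have : t ∈ S := ⟨le_of_lt ht, h⟩
      simp [hcon] at this
    change ∫⁻ t in Set.Ioi (0 : ℝ), min (g t) a = ⊤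
    rw [this]; simp [ha]
  have hbdd : BddBelow S := ⟨0, fun t ht => ht.1⟩
  have hs : 0 ≤ sInf S := le_csInf hne fun t ht => ht.1
  refine ⟨sInf S, hs, ?_⟩
  rw [lintegral_sub_eq_lintegral_meas μ hF hs]
  have hdisj : Disjoint (Set.Ioo 0 (sInf S)) (Set.Ioi (sInf S)) :=
    (Set.Ioc_disjoint_Ioi le_rfl).mono_left Set.Ioo_subset_Ioc_self
  calc a * ENNReal.ofReal (sInf S) + ∫⁻ t in Set.Ioi (sInf S), g t
      = (∫⁻ t in Set.Ioo 0 (sInf S), min (g t) a) + ∫⁻ t in Set.Ioi (sInf S), min (g t) a := by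
        congr 1
        · rw [setLIntegral_congr_fun (g := fun _ => a) measurableSet_Ioo]
          · simp
          · intro t ht
            refine min_eq_right (le_of_not_ge fun h => ?_)
            exact absurd (csInf_le hbdd (show t ∈ S from ⟨ht.1.le, h⟩)) (not_le.2 ht.2)
        · refine setLIntegral_congr_fun measurableSet_Ioi fun t ht => ?_
          obtain ⟨r, hr, hrt⟩ := exists_lt_of_csInf_lt hne ht
          exact (min_eq_left ((hanti hrt.le).trans hr.2)).symm
    _ = ∫⁻ t in Set.Ioo 0 (sInf S) ∪ Set.Ioi (sInf S), min (g t) a :=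
        (lintegral_union measurableSet_Ioi hdisj).symm
    _ ≤ _ := lintegral_mono_set (Set.union_subset Set.Ioo_subset_Ioi_self
        (Set.Ioi_subset_Ioi hs))

/-- Countable subadditivity of the K-functional of `(L¹, L^∞)`. -/
lemma trunc_tsum_le {α ι : Type*} [Countable ι] [MeasurableSpace α] (μ : Measure α)
    [SigmaFinite μ] {F : ι → α → ℝ≥0∞} (hF : ∀ j, Measurable (F j)) {a : ℝ≥0∞} (ha : a ≠ 0) :
    ∫⁻ t in Set.Ioi (0 : ℝ), min (μ {x | ENNReal.ofReal t < ∑' j, F j x}) a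
      ≤ ∑' j, ∫⁻ t in Set.Ioi (0 : ℝ), min (μ {x | ENNReal.ofReal t < F j x}) a := by
  by_cases hfin : ∑' j, ∫⁻ t in Set.Ioi (0 : ℝ), min (μ {x | ENNReal.ofReal t < F j x}) a = ⊤
  · rw [hfin]; exact le_top
  choose s hs0 hs using fun j =>
    exists_le_trunc μ (hF j) ha (ENNReal.ne_top_of_tsum_ne_top hfin j)
  have hsum : ∑' j, ENNReal.ofReal (s j) ≠ ⊤ := by
    intro h
    apply hfin
    rw [eq_top_iff]
    calc (⊤ : ℝ≥0∞) = a * ∑' j, ENNReal.ofReal (s j) := by rw [h, ENNReal.mul_top ha]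
      _ = ∑' j, a * ENNReal.ofReal (s j) := ENNReal.tsum_mul_left.symm
      _ ≤ _ := ENNReal.tsum_le_tsum fun j => le_self_add.trans (hs j)
  refine (trunc_le μ (Measurable.tsum hF)
    (ENNReal.toReal_nonneg (a := ∑' j, ENNReal.ofReal (s j))) a).trans ?_
  rw [ENNReal.ofReal_toReal hsum]
  refine le_trans ?_ (ENNReal.tsum_le_tsum hs)
  rw [ENNReal.tsum_add, ENNReal.tsum_mul_left,
    ← lintegral_tsum (f := fun j x => F j x - ENNReal.ofReal (s j))
      fun j => ((hF j).sub measurable_const).aemeasurable]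
  gcongr with x
  rw [tsub_le_iff_right, ← ENNReal.tsum_add]
  exact ENNReal.tsum_le_tsum fun j => le_tsub_add

/-- For `0 < θ < 1`, the concave power `u ^ θ` is a positive mixture of truncations `min u l`. -/
lemma lintegral_min_rpow {θ : ℝ} (h0 : 0 < θ) (h1 : θ < 1) (u : ℝ≥0∞) :
    ∫⁻ l in Set.Ioi (0 : ℝ), min u (ENNReal.ofReal l) * ENNReal.ofReal (l ^ (θ - 2))
      = ENNReal.ofReal (1 / (θ * (1 - θ))) * u ^ θ := by
  have hmul : ∀ l : ℝ, 0 < l →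
      ENNReal.ofReal l * ENNReal.ofReal (l ^ (θ - 2)) = ENNReal.ofReal (l ^ (θ - 1)) := by
    intro l hl
    rw [← ENNReal.ofReal_mul hl.le]
    congr 1
    rw [show θ - 1 = 1 + (θ - 2) by ring, Real.rpow_add hl, Real.rpow_one]
  have hd : 0 < 1 / (θ * (1 - θ)) := by
    have : 0 < 1 - θ := by linarith
    positivity
  rcases eq_or_ne u ⊤ with rfl | hu
  · rw [ENNReal.top_rpow_of_pos h0, ENNReal.mul_top (by simpa using hd)]
    rw [setLIntegral_congr_fun (g := fun l => ENNReal.ofReal (l ^ (θ - 1))) measurableSet_Ioi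
      (fun l hl => by simpa using hmul l hl)]
    by_contra hne
    refine not_integrableOn_Ioi_rpow (θ - 1) ?_
    refine (lintegral_ofReal_ne_top_iff_integrable ?_ ?_).1 hne
    · exact (by fun_prop : Measurable fun x : ℝ => x ^ (θ - 1)).aestronglyMeasurable
    · filter_upwards [ae_restrict_mem measurableSet_Ioi] with x hx
      exact Real.rpow_nonneg (le_of_lt hx) _
  lift u to NNReal using hu
  rcases eq_or_ne u 0 with rfl | hu0
  · simp [h0]
  have hv : (0 : ℝ) < u := NNReal.coe_pos.2 (pos_iff_ne_zero.2 hu0)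
  obtain ⟨v, hvdef⟩ : ∃ v : ℝ, v = (u : ℝ) := ⟨_, rfl⟩
  rw [← hvdef] at hv
  have huv : (u : ℝ≥0∞) = ENNReal.ofReal v := by simp [hvdef]
  rw [huv, ← Set.Ioc_union_Ioi_eq_Ioi hv.le,
    lintegral_union measurableSet_Ioi (Set.Ioc_disjoint_Ioi le_rfl)]
  have e1 : ∫⁻ l in Set.Ioc 0 v, min (ENNReal.ofReal v) (ENNReal.ofReal l)
      * ENNReal.ofReal (l ^ (θ - 2)) = ENNReal.ofReal (v ^ θ / θ) := by
    rw [setLIntegral_congr_fun (g := fun l => ENNReal.ofReal (l ^ (θ - 1))) measurableSet_Ioc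
      (fun l hl => by
        dsimp only
        rw [min_eq_right (ENNReal.ofReal_le_ofReal hl.2), hmul l hl.1])]
    rw [← ofReal_integral_eq_lintegral_ofReal]
    · rw [← intervalIntegral.integral_of_le hv.le, integral_rpow (Or.inl (by linarith))]
      simp [Real.zero_rpow h0.ne']
    · exact (intervalIntegrable_iff_integrableOn_Ioc_of_le hv.le).1
        (intervalIntegral.intervalIntegrable_rpow' (by linarith))
    · filter_upwards [ae_restrict_mem measurableSet_Ioc] with x hx
      exact Real.rpow_nonneg (le_of_lt hx.1) _
  have e2 : ∫⁻ l in Set.Ioi v, min (ENNReal.ofReal v) (ENNReal.ofReal l)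
      * ENNReal.ofReal (l ^ (θ - 2)) = ENNReal.ofReal (v ^ θ / (1 - θ)) := by
    rw [setLIntegral_congr_fun (g := fun l => ENNReal.ofReal v * ENNReal.ofReal (l ^ (θ - 2)))
      measurableSet_Ioi
      (fun l hl => by
        dsimp only
        rw [min_eq_left (ENNReal.ofReal_le_ofReal (le_of_lt hl))])]
    rw [lintegral_const_mul' _ _ ENNReal.ofReal_ne_top, ← ofReal_integral_eq_lintegral_ofReal,
      integral_Ioi_rpow_of_lt (by linarith) hv, ← ENNReal.ofReal_mul hv.le]
    · congr 1
      rw [show θ - 2 + 1 = θ - 1 by ring, Real.rpow_sub_one hv.ne']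
      have : 1 - θ ≠ 0 := by linarith
      have : θ - 1 ≠ 0 := by linarith
      field_simp
      ring
    · exact integrableOn_Ioi_rpow_of_lt (by linarith) hv
    · filter_upwards [ae_restrict_mem measurableSet_Ioi] with x hx
      exact Real.rpow_nonneg (hv.le.trans (le_of_lt hx)) _
  have : 0 < 1 - θ := by linarith
  rw [e1, e2, ENNReal.ofReal_rpow_of_pos hv, ← ENNReal.ofReal_mul hd.le,
    ← ENNReal.ofReal_add (by positivity) (by positivity)]
  congr 1
  field_simp
  ring

/-- Countable subadditivity of the `L^{1/θ,1}` functional for `0 < θ ≤ 1`. -/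
lemma lintegral_meas_rpow_tsum_le {α ι : Type*} [Countable ι] [MeasurableSpace α]
    (μ : Measure α) [SigmaFinite μ] {F : ι → α → ℝ≥0∞} (hF : ∀ j, Measurable (F j))
    {θ : ℝ} (h0 : 0 < θ) (h1 : θ ≤ 1) :
    ∫⁻ t in Set.Ioi (0 : ℝ), μ {x | ENNReal.ofReal t < ∑' j, F j x} ^ θ
      ≤ ∑' j, ∫⁻ t in Set.Ioi (0 : ℝ), μ {x | ENNReal.ofReal t < F j x} ^ θ := by
  rcases h1.eq_or_lt with rfl | h1
  · simp only [ENNReal.rpow_one]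
    simp_rw [← lintegral_sub_eq_lintegral_meas μ (hF _) le_rfl]
    rw [← lintegral_sub_eq_lintegral_meas μ (Measurable.tsum hF) le_rfl]
    simp only [ENNReal.ofReal_zero, tsub_zero]
    rw [lintegral_tsum fun j => (hF j).aemeasurable]
  set c : ℝ≥0∞ := ENNReal.ofReal (1 / (θ * (1 - θ))) with hc
  have hc0 : c ≠ 0 := by
    have : 0 < 1 - θ := by linarith
    have : 0 < 1 / (θ * (1 - θ)) := by positivity
    simpa [hc] using this
  have hct : c ≠ ⊤ := ENNReal.ofReal_ne_top
  have key : ∀ G : α → ℝ≥0∞,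
      c * ∫⁻ t in Set.Ioi (0 : ℝ), μ {x | ENNReal.ofReal t < G x} ^ θ
        = ∫⁻ l in Set.Ioi (0 : ℝ), (∫⁻ t in Set.Ioi (0 : ℝ),
            min (μ {x | ENNReal.ofReal t < G x}) (ENNReal.ofReal l))
              * ENNReal.ofReal (l ^ (θ - 2)) := by
    intro G
    have hm : Measurable fun t : ℝ => μ {x | ENNReal.ofReal t < G x} :=
      (antitone_meas μ G).measurable
    rw [← lintegral_const_mul' _ _ hct]
    simp_rw [hc, ← lintegral_min_rpow h0 h1]
    rw [lintegral_lintegral_swap]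
    · refine lintegral_congr fun l => ?_
      rw [lintegral_mul_const' _ _ ENNReal.ofReal_ne_top]
    · refine Measurable.aemeasurable ?_
      refine Measurable.mul (Measurable.min (hm.comp measurable_fst) (by fun_prop)) (by fun_prop)
  rw [← ENNReal.mul_le_mul_iff_right hc0 hct, ← ENNReal.tsum_mul_left]
  simp_rw [key]
  rw [← lintegral_tsum]
  · refine setLIntegral_mono' measurableSet_Ioi fun l hl => ?_
    rw [ENNReal.tsum_mul_right]
    gcongr
    exact trunc_tsum_le μ hF (by simpa using hl)
  · intro j
    have hmono : Monotone fun l : ℝ => ∫⁻ t in Set.Ioi (0 : ℝ),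
        min (μ {x | ENNReal.ofReal t < F j x}) (ENNReal.ofReal l) := fun a b hab =>
      lintegral_mono fun t => min_le_min le_rfl (ENNReal.ofReal_le_ofReal hab)
    exact (hmono.measurable.mul (by fun_prop)).aemeasurable

/-- The substitution `t = s ^ 2`. -/
lemma lintegral_Ioi_sq (G : ℝ → ℝ≥0∞) :
    ∫⁻ t in Set.Ioi (0 : ℝ), G t = 2 * ∫⁻ s in Set.Ioi (0 : ℝ), ENNReal.ofReal s * G (s ^ 2) := by
  have himg : (fun s : ℝ => s ^ 2) '' Set.Ioi 0 = Set.Ioi 0 := by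
    ext t
    constructor
    · rintro ⟨s, hs, rfl⟩
      exact pow_pos (show (0 : ℝ) < s from hs) 2
    · intro ht
      exact ⟨Real.sqrt t, Real.sqrt_pos.2 ht, Real.sq_sqrt (le_of_lt ht)⟩
  have := lintegral_image_eq_lintegral_deriv_mul_of_monotoneOn (s := Set.Ioi (0 : ℝ))
    (f := fun s => s ^ 2) (f' := fun s => 2 * s) measurableSet_Ioi
    (fun x _ => by simpa using (hasDerivAt_pow 2 x).hasDerivWithinAt)
    (fun a ha b _ hab => pow_le_pow_left₀ (le_of_lt ha) hab 2) G
  rw [himg] at this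
  rw [this, ← lintegral_const_mul' _ _ (by simp)]
  refine lintegral_congr fun s => ?_
  rw [ENNReal.ofReal_mul (by norm_num), mul_assoc]
  simp

/-- For `2 ≤ q < ∞`, the square function inequality
`‖(∑_j |h_j|²)^{1/2}‖_{L^{q,2}} ≤ C (∑_j ‖h_j‖_{L^{q,2}}²)^{1/2}` holds with `C`
depending only on `q`. -/
theorem sq_fn_lorentz_triangle (q : ℝ) (hq : 2 ≤ q) :
    ∃ C : ℝ, 0 < C ∧
      ∀ {α : Type} [MeasurableSpace α] (μ : Measure α) [SigmaFinite μ]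
        (h : ℤ → α → ℝ), (∀ j, Measurable (h j)) →
        lorentzNorm μ q 2 (fun x => Real.sqrt (∑' j : ℤ, (h j x) ^ 2))
          ≤ ENNReal.ofReal C * (∑' j : ℤ, lorentzNorm μ q 2 (h j) ^ 2) ^ (1/2 : ℝ) := by
  refine ⟨1, one_pos, ?_⟩
  intro α _ μ _ h hh
  rw [ENNReal.ofReal_one, one_mul]
  have h0 : 0 < 2 / q := by positivity
  have h1 : 2 / q ≤ 1 := by rw [div_le_one (by linarith)]; exact hq
  set F : ℤ → α → ℝ≥0∞ := fun j x => ENNReal.ofReal (h j x ^ 2) with hFdef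
  have hF : ∀ j, Measurable (F j) := fun j => ((hh j).pow_const 2).ennreal_ofReal
  have hsq : ∀ j, lorentzNorm μ q 2 (h j) ^ 2 = ∫⁻ s in Set.Ioi (0 : ℝ),
      ENNReal.ofReal s * μ {x | ENNReal.ofReal (s ^ 2) < F j x} ^ (2 / q) := by
    intro j
    unfold lorentzNorm
    rw [← ENNReal.rpow_natCast, ← ENNReal.rpow_mul]
    norm_num only [Nat.cast_ofNat]
    rw [ENNReal.rpow_one]
    refine setLIntegral_congr_fun measurableSet_Ioi fun s hs => ?_
    have hs' : (0 : ℝ) < s := hs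
    have : {x | s < |h j x|} = {x | ENNReal.ofReal (s ^ 2) < F j x} := by
      ext x
      simp only [Set.mem_ofPred_eq, hFdef]
      rw [ENNReal.ofReal_lt_ofReal_iff_of_nonneg (sq_nonneg s), ← sq_abs (h j x),
        pow_lt_pow_iff_left₀ hs'.le (abs_nonneg _) two_ne_zero]
    simp only [this, Real.rpow_one]
  simp_rw [hsq]
  unfold lorentzNorm
  refine ENNReal.rpow_le_rpow ?_ (by norm_num)
  have main := lintegral_meas_rpow_tsum_le μ hF h0 h1
  simp_rw [lintegral_Ioi_sq (fun t => μ {x | ENNReal.ofReal t < _} ^ (2 / q))] at main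
  rw [ENNReal.tsum_mul_left, ENNReal.mul_le_mul_iff_right (by simp) (by simp)] at main
  refine le_trans (setLIntegral_mono' measurableSet_Ioi fun s hs => ?_) main
  have hs' : (0 : ℝ) < s := hs
  norm_num only
  rw [Real.rpow_one]
  gcongr with x
  intro hx
  rw [abs_of_nonneg (Real.sqrt_nonneg _), Real.lt_sqrt hs'.le] at hx
  -- A divergent real series has the junk sum `0`, which cannot exceed `s ^ 2`.
  have hsum : Summable fun j => h j x ^ 2 := by
    by_contra hn
    rw [tsum_eq_zero_of_not_summable hn] at hx
    nlinarith
  rw [← ENNReal.ofReal_tsum_of_nonneg (fun j => sq_nonneg _) hsum]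
  exact (ENNReal.ofReal_lt_ofReal_iff_of_nonneg (sq_nonneg s)).2 hx
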